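/- Let C₀ > 0, t > 0 and x ∈ ℝ². Let f : [0,t] × ℝ² × ℝ² → [0,∞) be measurable with f(s,y,p) ≤ C₀ almost everywhere. Then there is a constant C, depending only on C₀, such that for every ε ∈ (0,1]: ∫₀ᵗ ∫_{|y−x| ≤ t−s} ∫_{ℝ²} f(s,y,p) / ( p_0 (1 + p̂·ξ) (t−s) √((t−s)² − |y−x|²) ) dp dy ds ≤ C (1+t) [ ε^{−1/10} ( ∫₀ᵗ ∫_{|y−x| ≤ t−s} (∫_{ℝ²} p_0² f(s,y,p) dp) / √((t−s)² − |y−x|²) dy ds )^{2/5} + ε^{3/10} ( ∫₀ᵗ ∫_{|y−x| ≤ t−s} (∫_{ℝ²} p_0⁴ f(s,y,p) dp) / √((t−s)² − |y−x|²) dy ds )^{2/5} ]. (This integral dominates the term K_T in the Glassey–Schaeffer representation of the electromagnetic field in two dimensions.) -/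

import Mathlib

open MeasureTheory Set
open scoped NNReal RealInnerProductSpace

/-- `p₀ = √(1 + |p|²)` for `p ∈ ℝ²`. -/
noncomputable def pZero (p : EuclideanSpace ℝ (Fin 2)) : ℝ := Real.sqrt (1 + ‖p‖ ^ 2)

/-- `p̂ = p / p₀` for `p ∈ ℝ²`. -/
noncomputable def pHat (p : EuclideanSpace ℝ (Fin 2)) : EuclideanSpace ℝ (Fin 2) :=
  (pZero p)⁻¹ • p

/-! In a fixed direction `ξ`, the kernel `(p₀ + p·ξ)⁻¹` has an integral of order `R²` over the low
momenta `p₀ ≤ R`, while the high momenta contribute at most `R⁻³` times a moment of the density;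
optimizing `R` leaves the moment to the power `2/5`. The moment depends on how the kernel is
bounded: the bound `2 p₀` always holds and costs a `p₀⁴` moment, whereas `1 / ((1 - |ξ|) p₀)` costs
only a `p₀²` moment. The first bound is used where `1 - |ξ| ≤ ε` and the second elsewhere, and
Hölder's inequality with exponents `5/2` and `5/3` against the wave kernel then separates the moment
from an explicit weight. In the coordinates `y = x + (t - s) ξ`, `v = 1 - |ξ|` the integral of the
weight factors into `∫ τ^(-2/3) dτ` and `∫ v^(-1/2) H(v) dv`, where `H(v)` is the indicator of
`v ≤ ε`, respectively `v^(-2/3)` on `v > ε`; their powers `3/5` are `ε^(3/10)` and `ε^(-1/10)`. -/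

open Metric
open scoped ENNReal

local notation "ℝ²" => EuclideanSpace ℝ (Fin 2)

section Interpolation

theorem ennreal_le_rpow_of_forall_le_add_rpow {I M : ℝ≥0∞} {A : ℝ≥0} {a b : ℝ} (ha : 0 < a)
    (hb : 0 < b)
    (h : ∀ R : ℝ≥0, 0 < R → I ≤ A * (R : ℝ≥0∞) ^ a + M * (R : ℝ≥0∞) ^ (-b)) :
    I ≤ (A + 1) * M ^ (a / (a + b)) := by
  rcases eq_or_ne M ⊤ with rfl | hM
  · simp [ENNReal.top_rpow_of_pos (div_pos ha (add_pos ha hb))]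
  rcases eq_or_ne M 0 with rfl | hM₀
  · have hlim : Filter.Tendsto (fun R : ℝ≥0 ↦ (A : ℝ≥0∞) * (R : ℝ≥0∞) ^ a)
        (nhdsWithin 0 (Ioi 0)) (nhds 0) := by
      have hcont : Continuous fun R : ℝ≥0 ↦ (A : ℝ≥0∞) * (R : ℝ≥0∞) ^ a :=
        (ENNReal.continuous_const_mul ENNReal.coe_ne_top).comp
          ((ENNReal.continuous_rpow_const).comp ENNReal.continuous_coe)
      simpa [ENNReal.zero_rpow_of_pos ha] using (hcont.tendsto 0).mono_left nhdsWithin_le_nhds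
    have hI : I ≤ 0 := ge_of_tendsto hlim <| by
      filter_upwards [self_mem_nhdsWithin] with R hR
      simpa using h R hR
    exact hI.trans zero_le
  · lift M to ℝ≥0 using hM
    have hM₀ : M ≠ 0 := by simpa using hM₀
    refine (h (M ^ (1 / (a + b))) (NNReal.rpow_pos (pos_iff_ne_zero.2 hM₀))).trans_eq ?_
    have hsmall : 1 / (a + b) * a = a / (a + b) := by ring
    have hlarge : 1 + 1 / (a + b) * -b = a / (a + b) := by
      field_simp [(add_pos ha hb).ne']
      ring
    rw [ENNReal.coe_rpow_of_ne_zero hM₀, ← ENNReal.rpow_mul, ← ENNReal.rpow_mul, hsmall, add_mul,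
      one_mul, ← hlarge, ENNReal.rpow_add _ _ (by simpa) (by simp), ENNReal.rpow_one]

variable {α : Type*} [MeasurableSpace α] {μ : Measure α}

theorem lintegral_mul_le_rpow_moment {g k m w : α → ℝ≥0∞} {A C : ℝ≥0} {a b : ℝ} (ha : 0 < a)
    (hb : 0 < b) (hw : Measurable w) (hg : ∀ᵐ x ∂μ, g x ≤ C)
    (hk : ∀ R : ℝ≥0, ∫⁻ x in {x | w x ≤ R}, k x ∂μ ≤ A * (R : ℝ≥0∞) ^ a)
    (hm : ∀ x, k x * w x ^ b ≤ m x) :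
    ∫⁻ x, g x * k x ∂μ ≤ (A * C + 1) * (∫⁻ x, m x * g x ∂μ) ^ (a / (a + b)) := by
  rw [← ENNReal.coe_mul]
  refine ennreal_le_rpow_of_forall_le_add_rpow ha hb fun R hR ↦ ?_
  have hS : MeasurableSet {x | w x ≤ R} := measurableSet_le hw measurable_const
  have hR_top : (R : ℝ≥0∞) ^ (-b) ≠ ⊤ := by simp [ENNReal.rpow_eq_top_iff, hR.ne']
  have hlow : ∫⁻ x in {x | w x ≤ R}, g x * k x ∂μ ≤ ↑(A * C) * (R : ℝ≥0∞) ^ a :=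
    calc ∫⁻ x in {x | w x ≤ R}, g x * k x ∂μ
        ≤ ∫⁻ x in {x | w x ≤ R}, C * k x ∂μ :=
          lintegral_mono_ae <| (ae_restrict_of_ae hg).mono fun x hx ↦ by gcongr
      _ = C * ∫⁻ x in {x | w x ≤ R}, k x ∂μ := lintegral_const_mul' _ _ ENNReal.coe_ne_top
      _ ≤ C * (A * (R : ℝ≥0∞) ^ a) := by gcongr; exact hk R
      _ = ↑(A * C) * (R : ℝ≥0∞) ^ a := by push_cast; ring
  have hhigh : ∫⁻ x in {x | w x ≤ R}ᶜ, g x * k x ∂μ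
      ≤ (∫⁻ x, m x * g x ∂μ) * (R : ℝ≥0∞) ^ (-b) := by
    rw [← lintegral_mul_const' _ _ hR_top]
    refine (setLIntegral_mono' hS.compl fun x hx ↦ ?_).trans (setLIntegral_le_lintegral _ _)
    have hRw : (R : ℝ≥0∞) ≤ w x := le_of_not_ge hx
    have hkx : k x ≤ m x * (R : ℝ≥0∞) ^ (-b) := by
      rw [ENNReal.rpow_neg, ← div_eq_mul_inv, ENNReal.le_div_iff_mul_le (by simp [hR.ne'])
        (by simp [hb.le])]
      exact (by gcongr : k x * (R : ℝ≥0∞) ^ b ≤ k x * w x ^ b).trans (hm x)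
    calc g x * k x ≤ g x * (m x * (R : ℝ≥0∞) ^ (-b)) := by gcongr
      _ = m x * g x * (R : ℝ≥0∞) ^ (-b) := by ring
  rw [← lintegral_add_compl _ hS]
  exact add_le_add hlow hhigh

theorem lintegral_mul_rpow_mul_rpow_le {w f g : α → ℝ≥0∞} (hw : Measurable w) (hf : Measurable f)
    (hg : Measurable g) {p q : ℝ} (hp : 0 ≤ p) (hq : 0 ≤ q) (hpq : p + q = 1) :
    ∫⁻ x, w x * (f x ^ p * g x ^ q) ∂μ
      ≤ (∫⁻ x, w x * f x ∂μ) ^ p * (∫⁻ x, w x * g x ∂μ) ^ q := by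
  have h := ENNReal.lintegral_mul_norm_pow_le (μ := μ.withDensity w) hf.aemeasurable
    hg.aemeasurable hp hq hpq
  rwa [lintegral_withDensity_eq_lintegral_mul _ hw (by fun_prop),
    lintegral_withDensity_eq_lintegral_mul _ hw hf,
    lintegral_withDensity_eq_lintegral_mul _ hw hg] at h

end Interpolation

section Integrals

theorem lintegral_Ioc_rpow {r b : ℝ} (hr : -1 < r) (hb : 0 ≤ b) :
    ∫⁻ v in Ioc 0 b, ENNReal.ofReal (v ^ r) = ENNReal.ofReal (b ^ (r + 1) / (r + 1)) := by
  have hint := intervalIntegral.intervalIntegrable_rpow' (a := 0) (b := b) hr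
  rw [intervalIntegrable_iff_integrableOn_Ioc_of_le hb] at hint
  rw [← ofReal_integral_eq_lintegral_ofReal hint, ← intervalIntegral.integral_of_le hb,
    integral_rpow (Or.inl hr), Real.zero_rpow (by linarith), sub_zero]
  filter_upwards [ae_restrict_mem measurableSet_Ioc] with v hv
  exact Real.rpow_nonneg hv.1.le r

theorem lintegral_Ioc_sub_rpow {r b : ℝ} (hr : -1 < r) (hb : 0 ≤ b) :
    ∫⁻ v in Ioc 0 b, ENNReal.ofReal ((b - v) ^ r) = ENNReal.ofReal (b ^ (r + 1) / (r + 1)) := by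
  rw [← lintegral_Ioc_rpow hr hb, setLIntegral_congr (Ioo_ae_eq_Ioc (a := (0 : ℝ)) (b := b)).symm,
    setLIntegral_congr (Ioo_ae_eq_Ioc (a := (0 : ℝ)) (b := b)).symm]
  simpa using (Measure.measurePreserving_sub_left volume b).setLIntegral_comp_preimage_emb
    (Homeomorph.subLeft b).measurableEmbedding (fun v ↦ ENNReal.ofReal (v ^ r)) (Ioo 0 b)

theorem lintegral_Ioi_rpow {r b : ℝ} (hr : r < -1) (hb : 0 < b) :
    ∫⁻ v in Ioi b, ENNReal.ofReal (v ^ r) = ENNReal.ofReal (-b ^ (r + 1) / (r + 1)) := by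
  rw [← ofReal_integral_eq_lintegral_ofReal (integrableOn_Ioi_rpow_of_lt hr hb),
    integral_Ioi_rpow_of_lt hr hb]
  filter_upwards [ae_restrict_mem measurableSet_Ioi] with v hv
  exact Real.rpow_nonneg (hb.trans hv).le r

theorem lintegral_Ioo_zero_eq_lintegral_Ioo_zero_one {a : ℝ} (ha : 0 < a) (F : ℝ → ℝ≥0∞) :
    ∫⁻ r in Ioo 0 a, F r = ∫⁻ v in Ioo 0 1, ENNReal.ofReal a * F (a * (1 - v)) := by
  have himage : (fun v : ℝ ↦ a * (1 - v)) '' Ioo 0 1 = Ioo 0 a := by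
    rw [← image_image (fun u : ℝ ↦ a * u) (fun v ↦ 1 - v), image_const_sub_Ioo,
      image_mul_left_Ioo ha]
    simp
  have hderiv : ∀ v ∈ Ioo (0 : ℝ) 1,
      HasDerivWithinAt (fun v : ℝ ↦ a * (1 - v)) (-a) (Ioo 0 1) v := fun v _ ↦ by
    simpa using (((hasDerivAt_id v).const_sub 1).const_mul a).hasDerivWithinAt
  have hinj : InjOn (fun v : ℝ ↦ a * (1 - v)) (Ioo 0 1) := fun u _ v _ huv ↦ by
    simpa [ha.ne'] using huv
  rw [← himage, lintegral_image_eq_lintegral_abs_deriv_mul measurableSet_Ioo hderiv hinj]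
  simp [abs_of_pos ha]

section Radial

variable {E : Type*} [NormedAddCommGroup E] [NormedSpace ℝ E] [FiniteDimensional ℝ E]
  [Nontrivial E] [MeasurableSpace E] [BorelSpace E] (μ : Measure E) [μ.IsAddHaarMeasure]

theorem lintegral_fun_norm_addHaar {F : ℝ → ℝ≥0∞} (hF : Measurable F) :
    ∫⁻ x, F ‖x‖ ∂μ = Module.finrank ℝ E * μ (ball 0 1) *
      ∫⁻ r in Ioi (0 : ℝ), ENNReal.ofReal (r ^ (Module.finrank ℝ E - 1)) * F r :=
  calc ∫⁻ x, F ‖x‖ ∂μ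
      = ∫⁻ x : ({0}ᶜ : Set E), F ‖x.1‖ ∂(μ.comap (↑)) := by
        rw [lintegral_subtype_comap (measurableSet_singleton _).compl fun x ↦ F ‖x‖,
          restrict_compl_singleton]
    _ = ∫⁻ z, F z.2 ∂μ.toSphere.prod (.volumeIoiPow (Module.finrank ℝ E - 1)) := by
        simpa using (μ.measurePreserving_homeomorphUnitSphereProd.lintegral_comp_emb
          (Homeomorph.measurableEmbedding _) (F ∘ Subtype.val ∘ Prod.snd))
    _ = μ.toSphere univ * ∫⁻ r : Ioi (0 : ℝ), F r ∂.volumeIoiPow (Module.finrank ℝ E - 1) := by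
        rw [lintegral_prod _ (by fun_prop)]
        simp only [lintegral_const, mul_comm]
    _ = _ := by
        rw [μ.toSphere_apply_univ, Measure.volumeIoiPow,
          lintegral_withDensity_eq_lintegral_mul _ (by fun_prop) (by fun_prop),
          ← lintegral_subtype_comap measurableSet_Ioi]
        rfl

theorem setLIntegral_closedBall_fun_dist {F : ℝ → ℝ≥0∞} (hF : Measurable F) (x : E) (τ : ℝ) :
    ∫⁻ y in closedBall x τ, F (dist y x) ∂μ = Module.finrank ℝ E * μ (ball 0 1) *
      ∫⁻ r in Ioc 0 τ, ENNReal.ofReal (r ^ (Module.finrank ℝ E - 1)) * F r := by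
  have hind : ∀ y, (closedBall x τ).indicator (fun y ↦ F (dist y x)) y
      = (Iic τ).indicator F ‖y - x‖ := fun y ↦ by
    simp only [indicator, mem_closedBall, mem_Iic, dist_eq_norm]
  rw [← lintegral_indicator isClosed_closedBall.measurableSet, lintegral_congr hind,
    lintegral_sub_right_eq_self (fun y ↦ (Iic τ).indicator F ‖y‖),
    lintegral_fun_norm_addHaar μ (hF.indicator measurableSet_Iic)]
  simp_rw [← indicator_mul_right (Iic τ)
    (fun r ↦ ENNReal.ofReal (r ^ (Module.finrank ℝ E - 1)))]
  rw [setLIntegral_indicator measurableSet_Iic, inter_comm, Ioi_inter_Iic]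

end Radial

theorem lintegral_orthonormalBasis_repr_fin_two {E : Type*} [NormedAddCommGroup E]
    [InnerProductSpace ℝ E] [FiniteDimensional ℝ E] [MeasurableSpace E] [BorelSpace E]
    (b : OrthonormalBasis (Fin 2) ℝ E) (F : ℝ × ℝ → ℝ≥0∞) :
    ∫⁻ p, F (b.repr p 0, b.repr p 1) = ∫⁻ z, F z :=
  ((volume_preserving_finTwoArrow ℝ).comp ((PiLp.volume_preserving_ofLp (Fin 2)).comp
    b.measurePreserving_repr)).lintegral_comp_emb
    (MeasurableEquiv.finTwoArrow.measurableEmbedding.comp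
      ((MeasurableEquiv.toLp 2 (Fin 2 → ℝ)).symm.measurableEmbedding.comp
        b.repr.toMeasurableEquiv.measurableEmbedding)) F

theorem setLIntegral_prod_eq_lintegral_fiber {α β : Type*} [MeasurableSpace α] [MeasurableSpace β]
    {μ : Measure α} {ν : Measure β} [SFinite ν] {S : Set (α × β)} (hS : MeasurableSet S)
    {F : α × β → ℝ≥0∞} (hF : Measurable F) :
    ∫⁻ z in S, F z ∂(μ.prod ν) = ∫⁻ x, ∫⁻ y in Prod.mk x ⁻¹' S, F (x, y) ∂ν ∂μ := by
  rw [← lintegral_indicator hS, lintegral_prod _ (hF.indicator hS).aemeasurable]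
  refine lintegral_congr fun x ↦ ?_
  rw [← lintegral_indicator (measurable_prodMk_left hS)]
  rfl

end Integrals

section Momentum

theorem pZero_sq (p : ℝ²) : pZero p ^ 2 = 1 + ‖p‖ ^ 2 := Real.sq_sqrt (by positivity)

theorem one_le_pZero (p : ℝ²) : 1 ≤ pZero p := Real.one_le_sqrt.2 (by simp)

theorem pZero_pos (p : ℝ²) : 0 < pZero p := one_pos.trans_le (one_le_pZero p)

theorem norm_lt_pZero (p : ℝ²) : ‖p‖ < pZero p :=
  lt_of_pow_lt_pow_left₀ 2 (pZero_pos p).le (by linarith [pZero_sq p])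

@[fun_prop]
theorem measurable_pZero : Measurable pZero := by
  unfold pZero
  fun_prop

theorem pZero_mul_one_add_inner_pHat (p ξ : ℝ²) :
    pZero p * (1 + ⟪pHat p, ξ⟫) = pZero p + ⟪p, ξ⟫ := by
  rw [pHat, real_inner_smul_left, mul_add, mul_one, mul_inv_cancel_left₀ (pZero_pos p).ne']

theorem one_sub_norm_mul_pZero_le (p ξ : ℝ²) : (1 - ‖ξ‖) * pZero p ≤ pZero p + ⟪p, ξ⟫ := by
  have hinner : -(‖p‖ * ‖ξ‖) ≤ ⟪p, ξ⟫ := (abs_le.1 (abs_real_inner_le_norm p ξ)).1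
  have hnorm : ‖p‖ * ‖ξ‖ ≤ pZero p * ‖ξ‖ := by gcongr; exact (norm_lt_pZero p).le
  linarith

theorem abs_real_inner_le_norm_left {E : Type*} [NormedAddCommGroup E] [InnerProductSpace ℝ E]
    (p : E) {ξ : E} (hξ : ‖ξ‖ ≤ 1) : |⟪p, ξ⟫| ≤ ‖p‖ :=
  (abs_real_inner_le_norm p ξ).trans (mul_le_of_le_one_right (norm_nonneg p) hξ)

/- `(p₀ + a)(p₀ - a) = 1 + |p|² - a²`: the component of `p` orthogonal to `ξ` is what keeps the
kernel from degenerating. -/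
theorem inv_pZero_add_le {p : ℝ²} {a : ℝ} (ha : |a| ≤ ‖p‖) :
    (pZero p + a)⁻¹ ≤ 2 * pZero p * (1 + ‖p‖ ^ 2 - a ^ 2)⁻¹ := by
  obtain ⟨hlower, hupper⟩ := abs_lt.1 (ha.trans_lt (norm_lt_pZero p))
  have hpos : 0 < pZero p - a := by linarith
  have hfactor : 1 + ‖p‖ ^ 2 - a ^ 2 = (pZero p + a) * (pZero p - a) := by
    linear_combination -pZero_sq p
  rw [hfactor, mul_inv, mul_left_comm, ← div_eq_mul_inv (2 * pZero p)]
  exact le_mul_of_one_le_right (inv_nonneg.2 (by linarith)) ((one_le_div hpos).2 (by linarith))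

theorem inv_pZero_add_inner_le_two_mul (p : ℝ²) {ξ : ℝ²} (hξ : ‖ξ‖ ≤ 1) :
    (pZero p + ⟪p, ξ⟫)⁻¹ ≤ 2 * pZero p := by
  have hinner := abs_real_inner_le_norm_left p hξ
  refine (inv_pZero_add_le hinner).trans
    (mul_le_of_le_one_right (by linarith [pZero_pos p]) (inv_le_one_of_one_le₀ ?_))
  linarith [sq_le_sq' (abs_le.1 hinner).1 (abs_le.1 hinner).2]

theorem inv_pZero_add_inner_le_inv (p : ℝ²) {ξ : ℝ²} (hξ : ‖ξ‖ < 1) :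
    (pZero p + ⟪p, ξ⟫)⁻¹ ≤ (1 - ‖ξ‖)⁻¹ * (pZero p)⁻¹ := by
  rw [← mul_inv]
  exact inv_anti₀ (mul_pos (sub_pos.2 hξ) (pZero_pos p)) (one_sub_norm_mul_pZero_le p ξ)

theorem exists_orthonormalBasis_inner_eq_norm_mul_repr {ι E : Type*} [Fintype ι]
    [NormedAddCommGroup E] [InnerProductSpace ℝ E] (b₀ : OrthonormalBasis ι ℝ E) (i : ι) (ξ : E) :
    ∃ b : OrthonormalBasis ι ℝ E, ∀ p, ⟪p, ξ⟫ = ‖ξ‖ * b.repr p i := by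
  set T := (ℝ ∙ (ξ - ‖ξ‖ • b₀ i))ᗮ.reflection
  have hT : T ξ = ‖ξ‖ • b₀ i := Submodule.reflection_sub (by simp [norm_smul])
  refine ⟨b₀.map T.symm, fun p ↦ ?_⟩
  rw [OrthonormalBasis.repr_apply_apply, OrthonormalBasis.map_apply, ← real_inner_smul_left,
    ← map_smul, ← hT, T.symm_apply_apply, real_inner_comm]

theorem indicator_inv_pZero_add_inner_le {ξ : ℝ²} (hξ : ‖ξ‖ ≤ 1)
    {b : OrthonormalBasis (Fin 2) ℝ ℝ²} (hb : ∀ p, ⟪p, ξ⟫ = ‖ξ‖ * b.repr p 0) (R : ℝ≥0) (p : ℝ²) :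
    {p | pZero p ≤ R}.indicator (fun p ↦ ENNReal.ofReal (pZero p + ⟪p, ξ⟫)⁻¹) p
      ≤ (Icc (-R : ℝ) R).indicator (fun _ ↦ ENNReal.ofReal (2 * R)) (b.repr p 0)
        * ENNReal.ofReal (1 + b.repr p 1 ^ 2)⁻¹ := by
  refine indicator_apply_le' (fun (hp : pZero p ≤ R) ↦ ?_) (fun _ ↦ zero_le)
  have hnorm : ‖p‖ ^ 2 = b.repr p 0 ^ 2 + b.repr p 1 ^ 2 := by
    rw [← b.repr.norm_map, EuclideanSpace.norm_sq_eq]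
    simp
  have hR : b.repr p 0 ∈ Icc (-R : ℝ) R :=
    abs_le.1 (abs_le_of_sq_le_sq (by nlinarith [pZero_sq p, one_le_pZero p]) R.2)
  have hinner_sq : ⟪p, ξ⟫ ^ 2 ≤ b.repr p 0 ^ 2 := by
    rw [hb, mul_pow]
    exact mul_le_of_le_one_left (sq_nonneg _) (pow_le_one₀ (norm_nonneg ξ) hξ)
  rw [indicator_of_mem hR, ← ENNReal.ofReal_mul (by positivity)]
  have hden : 1 + b.repr p 1 ^ 2 ≤ 1 + ‖p‖ ^ 2 - ⟪p, ξ⟫ ^ 2 := by linarith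
  refine ENNReal.ofReal_le_ofReal
    ((inv_pZero_add_le (abs_real_inner_le_norm_left p hξ)).trans ?_)
  exact mul_le_mul (by linarith) (inv_anti₀ (by positivity) hden)
    (inv_nonneg.2 (le_trans (by positivity) hden)) (by positivity)

theorem setLIntegral_pZero_le_inv_pZero_add_inner_le {ξ : ℝ²} (hξ : ‖ξ‖ ≤ 1) (R : ℝ≥0) :
    ∫⁻ p in {p | pZero p ≤ R}, ENNReal.ofReal (pZero p + ⟪p, ξ⟫)⁻¹
      ≤ ↑(4 * NNReal.pi) * (R : ℝ≥0∞) ^ (2 : ℝ) := by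
  obtain ⟨b, hb⟩ := exists_orthonormalBasis_inner_eq_norm_mul_repr
    (EuclideanSpace.basisFun (Fin 2) ℝ) 0 ξ
  have hcauchy : ∫⁻ v : ℝ, ENNReal.ofReal (1 + v ^ 2)⁻¹ = NNReal.pi := by
    rw [← ofReal_integral_eq_lintegral_ofReal integrable_inv_one_add_sq
      (.of_forall fun v ↦ by positivity), integral_univ_inv_one_add_sq, ← NNReal.coe_real_pi,
      ENNReal.ofReal_coe_nnreal]
  have htwo : ENNReal.ofReal (2 * R) = 2 * R := by simp [ENNReal.ofReal_mul]
  rw [← lintegral_indicator (measurableSet_le measurable_pZero measurable_const)]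
  refine (lintegral_mono (indicator_inv_pZero_add_inner_le hξ hb R)).trans_eq ?_
  rw [lintegral_orthonormalBasis_repr_fin_two b fun z ↦
      (Icc (-R : ℝ) R).indicator (fun _ ↦ ENNReal.ofReal (2 * R)) z.1
        * ENNReal.ofReal (1 + z.2 ^ 2)⁻¹,
    Measure.volume_eq_prod,
    lintegral_prod_mul (g := fun v : ℝ ↦ ENNReal.ofReal (1 + v ^ 2)⁻¹)
      (measurable_const.indicator measurableSet_Icc).aemeasurable (by fun_prop),
    lintegral_indicator measurableSet_Icc, setLIntegral_const, Real.volume_Icc, sub_neg_eq_add,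
    ← two_mul, htwo, hcauchy, ENNReal.rpow_two]
  push_cast
  ring

/-- The moment `∫ p₀ⁿ g(p) dp` of a momentum density `g`. -/
noncomputable def momentumMoment (n : ℕ) (g : ℝ² → ℝ≥0∞) : ℝ≥0∞ :=
  ∫⁻ p, ENNReal.ofReal (pZero p ^ n) * g p

theorem measurable_momentumMoment {α : Type*} [MeasurableSpace α] {g : α → ℝ² → ℝ≥0∞}
    (hg : Measurable (Function.uncurry g)) (n : ℕ) :
    Measurable fun a ↦ momentumMoment n (g a) :=
  Measurable.lintegral_prod_right (by fun_prop)

variable {ξ : ℝ²} {g : ℝ² → ℝ≥0∞} {C₀ : ℝ≥0}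

theorem lintegral_mul_inv_pZero_add_inner_le (hξ : ‖ξ‖ ≤ 1) (hg : ∀ᵐ p, g p ≤ C₀) {c : ℝ} {n : ℕ}
    (hc : ∀ p, (pZero p + ⟪p, ξ⟫)⁻¹ * pZero p ^ 3 ≤ c * pZero p ^ n) :
    ∫⁻ p, g p * ENNReal.ofReal (pZero p + ⟪p, ξ⟫)⁻¹
      ≤ ↑(4 * NNReal.pi * C₀ + 1) * (ENNReal.ofReal c * momentumMoment n g) ^ (2 / 5 : ℝ) := by
  have hmoment := lintegral_mul_le_rpow_moment (g := g) (A := 4 * NNReal.pi) (b := 3)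
    (w := fun p ↦ ENNReal.ofReal (pZero p)) (m := fun p ↦ ENNReal.ofReal (c * pZero p ^ n))
    two_pos three_pos (by fun_prop) hg
    (by simpa using setLIntegral_pZero_le_inv_pZero_add_inner_le hξ) fun p ↦ by
      rw [ENNReal.ofReal_rpow_of_pos (pZero_pos p),
        ← ENNReal.ofReal_mul' (Real.rpow_nonneg (pZero_pos p).le 3)]
      exact ENNReal.ofReal_le_ofReal (mod_cast hc p)
  rw [momentumMoment, ← lintegral_const_mul' _ _ ENNReal.ofReal_ne_top]
  convert hmoment using 3
  · norm_cast
  · refine lintegral_congr fun p ↦ ?_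
    rw [ENNReal.ofReal_mul' (pow_nonneg (pZero_pos p).le n), mul_assoc]
  · norm_num

theorem lintegral_mul_inv_pZero_add_inner_le_momentumMoment_four (hξ : ‖ξ‖ ≤ 1)
    (hg : ∀ᵐ p, g p ≤ C₀) :
    ∫⁻ p, g p * ENNReal.ofReal (pZero p + ⟪p, ξ⟫)⁻¹
      ≤ ↑(4 * NNReal.pi * C₀ + 1) * (2 * momentumMoment 4 g) ^ (2 / 5 : ℝ) := by
  simpa using lintegral_mul_inv_pZero_add_inner_le hξ hg (c := 2) (n := 4) fun p ↦
    calc (pZero p + ⟪p, ξ⟫)⁻¹ * pZero p ^ 3 ≤ 2 * pZero p * pZero p ^ 3 :=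
          mul_le_mul_of_nonneg_right (inv_pZero_add_inner_le_two_mul p hξ)
            (pow_nonneg (pZero_pos p).le 3)
      _ = 2 * pZero p ^ 4 := by ring

theorem lintegral_mul_inv_pZero_add_inner_le_momentumMoment_two (hξ : ‖ξ‖ < 1)
    (hg : ∀ᵐ p, g p ≤ C₀) :
    ∫⁻ p, g p * ENNReal.ofReal (pZero p + ⟪p, ξ⟫)⁻¹
      ≤ ↑(4 * NNReal.pi * C₀ + 1)
        * (ENNReal.ofReal (1 - ‖ξ‖)⁻¹ * momentumMoment 2 g) ^ (2 / 5 : ℝ) :=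
  lintegral_mul_inv_pZero_add_inner_le hξ.le hg fun p ↦
    calc (pZero p + ⟪p, ξ⟫)⁻¹ * pZero p ^ 3 ≤ (1 - ‖ξ‖)⁻¹ * (pZero p)⁻¹ * pZero p ^ 3 :=
          mul_le_mul_of_nonneg_right (inv_pZero_add_inner_le_inv p hξ)
            (pow_nonneg (pZero_pos p).le 3)
      _ = (1 - ‖ξ‖)⁻¹ * pZero p ^ 2 := by
          field_simp [(pZero_pos p).ne']

end Momentum

section Profiles

/-- Weight, as a function of `v = 1 - |ξ|`, of the directions in which the kernel is bounded by
`2 p₀`. -/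
noncomputable def nearProfile (ε : ℝ) : ℝ → ℝ≥0∞ := (Iic ε).indicator 1

/-- Weight, as a function of `v = 1 - |ξ|`, of the directions in which the kernel is bounded by
`1 / (v p₀)`; the exponent is chosen so that `(v ^ (-2/3)) ^ (3/5) = (1 / v) ^ (2/5)`. -/
noncomputable def farProfile (ε : ℝ) : ℝ → ℝ≥0∞ :=
  (Ioi ε).indicator fun v ↦ ENNReal.ofReal (v ^ (-(2 / 3) : ℝ))

@[fun_prop]
theorem measurable_nearProfile (ε : ℝ) : Measurable (nearProfile ε) :=
  measurable_one.indicator measurableSet_Iic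

@[fun_prop]
theorem measurable_farProfile (ε : ℝ) : Measurable (farProfile ε) :=
  (by fun_prop : Measurable fun v : ℝ ↦ ENNReal.ofReal (v ^ (-(2 / 3) : ℝ))).indicator
    measurableSet_Ioi

theorem lintegral_rpow_mul_nearProfile_le {ε : ℝ} (hε : 0 < ε) :
    ∫⁻ v in Ioo 0 1, ENNReal.ofReal (v ^ (-(1 / 2) : ℝ)) * nearProfile ε v
      ≤ 2 * ENNReal.ofReal ε ^ (1 / 2 : ℝ) :=
  calc ∫⁻ v in Ioo 0 1, ENNReal.ofReal (v ^ (-(1 / 2) : ℝ)) * nearProfile ε v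
      = ∫⁻ v in Iic ε ∩ Ioo 0 1, ENNReal.ofReal (v ^ (-(1 / 2) : ℝ)) := by
        rw [← setLIntegral_indicator measurableSet_Iic]
        simp [nearProfile, indicator_apply]
    _ ≤ ∫⁻ v in Ioc 0 ε, ENNReal.ofReal (v ^ (-(1 / 2) : ℝ)) :=
        lintegral_mono_set fun v hv ↦ ⟨hv.2.1, hv.1⟩
    _ = 2 * ENNReal.ofReal ε ^ (1 / 2 : ℝ) := by
        rw [lintegral_Ioc_rpow (by norm_num) hε.le, ENNReal.ofReal_rpow_of_pos hε,
          ← ENNReal.ofReal_ofNat 2, ← ENNReal.ofReal_mul zero_le_two]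
        norm_num [div_eq_inv_mul]

theorem lintegral_rpow_mul_farProfile_le {ε : ℝ} (hε : 0 < ε) :
    ∫⁻ v in Ioo 0 1, ENNReal.ofReal (v ^ (-(1 / 2) : ℝ)) * farProfile ε v
      ≤ 6 * ENNReal.ofReal ε ^ (-(1 / 6) : ℝ) :=
  calc ∫⁻ v in Ioo 0 1, ENNReal.ofReal (v ^ (-(1 / 2) : ℝ)) * farProfile ε v
      ≤ ∫⁻ v, ENNReal.ofReal (v ^ (-(1 / 2) : ℝ)) * farProfile ε v :=
        setLIntegral_le_lintegral _ _
    _ = ∫⁻ v in Ioi ε, ENNReal.ofReal (v ^ (-(7 / 6) : ℝ)) := by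
        rw [← lintegral_indicator measurableSet_Ioi]
        refine lintegral_congr fun v ↦ ?_
        rw [farProfile, ← indicator_mul_right (Ioi ε) fun v ↦ ENNReal.ofReal (v ^ (-(1 / 2) : ℝ))]
        refine congrFun (indicator_congr fun v (hv : ε < v) ↦ ?_) v
        rw [← ENNReal.ofReal_mul (Real.rpow_nonneg (hε.trans hv).le _),
          ← Real.rpow_add (hε.trans hv)]
        norm_num
    _ = 6 * ENNReal.ofReal ε ^ (-(1 / 6) : ℝ) := by
        rw [lintegral_Ioi_rpow (by norm_num) hε, ENNReal.ofReal_rpow_of_pos hε,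
          ← ENNReal.ofReal_ofNat 6, ← ENNReal.ofReal_mul (by norm_num)]
        norm_num [div_eq_inv_mul]

theorem lintegral_mul_inv_pZero_add_inner_le_profiles {ξ : ℝ²} {g : ℝ² → ℝ≥0∞} {C₀ : ℝ≥0} {ε : ℝ}
    (hξ : ‖ξ‖ ≤ 1) (hg : ∀ᵐ p, g p ≤ C₀) (hε : 0 < ε) :
    ∫⁻ p, g p * ENNReal.ofReal (pZero p + ⟪p, ξ⟫)⁻¹
      ≤ ↑(2 * (4 * NNReal.pi * C₀ + 1)) *
        (momentumMoment 2 g ^ (2 / 5 : ℝ) * farProfile ε (1 - ‖ξ‖) ^ (3 / 5 : ℝ)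
          + momentumMoment 4 g ^ (2 / 5 : ℝ) * nearProfile ε (1 - ‖ξ‖) ^ (3 / 5 : ℝ)) := by
  rw [mul_comm 2, ENNReal.coe_mul, mul_assoc]
  rcases le_or_gt (1 - ‖ξ‖) ε with hle | hlt
  · have hnear : nearProfile ε (1 - ‖ξ‖) = 1 := indicator_of_mem (mem_Iic.2 hle) _
    have htwo : (2 : ℝ≥0∞) ^ (2 / 5 : ℝ) ≤ 2 :=
      (ENNReal.rpow_le_rpow_of_exponent_le one_le_two (by norm_num)).trans_eq (ENNReal.rpow_one 2)
    refine (lintegral_mul_inv_pZero_add_inner_le_momentumMoment_four hξ hg).trans ?_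
    rw [ENNReal.mul_rpow_of_nonneg _ _ (by norm_num), hnear, ENNReal.one_rpow, mul_one]
    exact mul_le_mul_right (mul_le_mul' (mod_cast htwo) le_add_self) _
  · have hpos : 0 < 1 - ‖ξ‖ := hε.trans hlt
    refine (lintegral_mul_inv_pZero_add_inner_le_momentumMoment_two (sub_pos.1 hpos) hg).trans ?_
    have hexp : ENNReal.ofReal (1 - ‖ξ‖)⁻¹ ^ (2 / 5 : ℝ)
        = farProfile ε (1 - ‖ξ‖) ^ (3 / 5 : ℝ) := by
      rw [farProfile, indicator_of_mem (mem_Ioi.2 hlt), ← ENNReal.ofReal_rpow_of_pos hpos,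
        ENNReal.ofReal_inv_of_pos hpos, ← ENNReal.rpow_neg_one, ← ENNReal.rpow_mul,
        ← ENNReal.rpow_mul]
      norm_num
    rw [ENNReal.mul_rpow_of_nonneg _ _ (by norm_num), hexp, mul_comm (farProfile _ _ ^ _)]
    exact mul_le_mul_right (le_self_add.trans (le_mul_of_one_le_left' (mod_cast one_le_two))) _

end Profiles

section Cone

/-- The solid backward light cone `{(s, y) : 0 < s, |y - x| ≤ t - s}` with vertex `(t, x)`. -/
def backwardCone {X : Type*} [PseudoMetricSpace X] (t : ℝ) (x : X) : Set (ℝ × X) :=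
  {z | 0 < z.1 ∧ dist z.2 x ≤ t - z.1}

/-- The kernel `1 / √(τ² - r²)` of the two-dimensional wave equation, up to the factor `1 / 2π`,
with the value `⊤` on the surface `r = τ` of the light cone. -/
noncomputable def waveKernel (τ r : ℝ) : ℝ≥0∞ := (ENNReal.ofReal √(τ ^ 2 - r ^ 2))⁻¹

@[fun_prop]
theorem measurable_waveKernel {α : Type*} [MeasurableSpace α] {τ r : α → ℝ} (hτ : Measurable τ)
    (hr : Measurable r) : Measurable fun a ↦ waveKernel (τ a) (r a) := by
  unfold waveKernel
  fun_prop

theorem measurableSet_backwardCone {X : Type*} [PseudoMetricSpace X] [MeasurableSpace X]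
    [OpensMeasurableSpace X] (t : ℝ) (x : X) : MeasurableSet (backwardCone t x) :=
  (measurableSet_lt measurable_const measurable_fst).inter <|
    measurableSet_le ((continuous_id.dist continuous_const).measurable.comp measurable_snd)
      (measurable_const.sub measurable_fst)

theorem setLIntegral_backwardCone {X : Type*} [PseudoMetricSpace X] [MeasurableSpace X]
    [OpensMeasurableSpace X] {ν : Measure X} [SFinite ν] (t : ℝ) (x : X) {F : ℝ × X → ℝ≥0∞}
    (hF : Measurable F) :
    ∫⁻ z in backwardCone t x, F z ∂(volume.prod ν)
      = ∫⁻ s in Ioc 0 t, ∫⁻ y in {y | dist y x ≤ t - s}, F (s, y) ∂ν := by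
  rw [setLIntegral_prod_eq_lintegral_fiber (measurableSet_backwardCone t x) hF,
    ← lintegral_indicator measurableSet_Ioc]
  refine lintegral_congr fun s ↦ ?_
  by_cases hs : s ∈ Ioc 0 t
  · simp [hs, hs.1, backwardCone]
  · have hempty : Prod.mk s ⁻¹' backwardCone t x = ∅ := eq_empty_of_forall_notMem fun y hy ↦
      hs ⟨hy.1, sub_nonneg.1 (dist_nonneg.trans hy.2)⟩
    simp [hs, hempty]

theorem ofReal_mul_waveKernel_le {τ v : ℝ} (hτ : 0 < τ) (hv : v ∈ Ioo 0 1) :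
    ENNReal.ofReal (τ * (1 - v)) * waveKernel τ (τ * (1 - v))
      ≤ ENNReal.ofReal (v ^ (-(1 / 2) : ℝ)) := by
  have hv₂ : 0 < 2 - v := by linarith [hv.2]
  have hfactor : √(τ ^ 2 - (τ * (1 - v)) ^ 2) = τ * (√v * √(2 - v)) := by
    rw [← Real.sqrt_mul hv.1.le, ← Real.sqrt_sq hτ.le, ← Real.sqrt_mul (sq_nonneg τ),
      Real.sqrt_sq hτ.le]
    congr 1
    ring
  have hone : 1 - v ≤ √(2 - v) := Real.le_sqrt_of_sq_le (by nlinarith [hv.1, hv.2])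
  have hsqrt : 0 < √v := Real.sqrt_pos.2 hv.1
  rw [waveKernel, hfactor, ← ENNReal.ofReal_inv_of_pos (by positivity),
    ← ENNReal.ofReal_mul (mul_nonneg hτ.le (sub_nonneg.2 hv.2.le)), Real.rpow_neg hv.1.le,
    ← Real.sqrt_eq_rpow]
  refine ENNReal.ofReal_le_ofReal ?_
  rw [← div_eq_mul_inv, mul_div_mul_left _ _ hτ.ne', div_le_iff₀ (by positivity),
    inv_mul_cancel_left₀ hsqrt.ne']
  exact hone

theorem setLIntegral_closedBall_waveKernel_mul_le (x : ℝ²) {τ : ℝ} (hτ : 0 < τ) {H : ℝ → ℝ≥0∞}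
    (hH : Measurable H) :
    ∫⁻ y in closedBall x τ, waveKernel τ (dist y x) * H (1 - dist y x / τ)
      ≤ ↑(2 * NNReal.pi) * ENNReal.ofReal τ *
        ∫⁻ v in Ioo 0 1, ENNReal.ofReal (v ^ (-(1 / 2) : ℝ)) * H v := by
  have hpointwise : ∀ v ∈ Ioo (0 : ℝ) 1,
      ENNReal.ofReal (τ * (1 - v)) * (waveKernel τ (τ * (1 - v)) * H (1 - τ * (1 - v) / τ))
        ≤ ENNReal.ofReal (v ^ (-(1 / 2) : ℝ)) * H v := fun v hv ↦ by
    rw [mul_div_cancel_left₀ _ hτ.ne', sub_sub_cancel, ← mul_assoc]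
    exact mul_le_mul_left (ofReal_mul_waveKernel_le hτ hv) _
  rw [setLIntegral_closedBall_fun_dist volume (F := fun r ↦ waveKernel τ r * H (1 - r / τ))
      (by fun_prop), ← setLIntegral_congr Ioo_ae_eq_Ioc,
    lintegral_Ioo_zero_eq_lintegral_Ioo_zero_one hτ,
    lintegral_const_mul' _ _ ENNReal.ofReal_ne_top, EuclideanSpace.volume_ball_fin_two,
    finrank_euclideanSpace_fin, mul_assoc _ (ENNReal.ofReal τ)]
  simp only [Nat.add_one_sub_one, pow_one]
  gcongr ?_ * (_ * ?_)
  · simp [← NNReal.coe_real_pi]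
  · exact setLIntegral_mono' measurableSet_Ioo hpointwise

theorem setLIntegral_backwardCone_waveKernel_mul_le (x : ℝ²) {t r : ℝ} (ht : 0 ≤ t) (hr : -2 < r)
    {H : ℝ → ℝ≥0∞} (hH : Measurable H) :
    ∫⁻ z in backwardCone t x, waveKernel (t - z.1) (dist z.2 x) *
        (ENNReal.ofReal ((t - z.1) ^ r) * H (1 - dist z.2 x / (t - z.1)))
      ≤ ↑(2 * NNReal.pi) * ENNReal.ofReal (t ^ (r + 2) / (r + 2)) *
        ∫⁻ v in Ioo 0 1, ENNReal.ofReal (v ^ (-(1 / 2) : ℝ)) * H v := by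
  set I := ∫⁻ v in Ioo 0 1, ENNReal.ofReal (v ^ (-(1 / 2) : ℝ)) * H v
  have hslice : ∀ s ∈ Ioo 0 t,
      ∫⁻ y in closedBall x (t - s), waveKernel (t - s) (dist y x) *
          (ENNReal.ofReal ((t - s) ^ r) * H (1 - dist y x / (t - s)))
        ≤ ENNReal.ofReal ((t - s) ^ (r + 1)) * (↑(2 * NNReal.pi) * I) := fun s hs ↦ by
    have hτ : 0 < t - s := sub_pos.2 hs.2
    simp_rw [mul_left_comm (waveKernel _ _)]
    rw [lintegral_const_mul' _ _ ENNReal.ofReal_ne_top, Real.rpow_add_one hτ.ne',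
      ENNReal.ofReal_mul (Real.rpow_nonneg hτ.le r), mul_assoc (ENNReal.ofReal ((t - s) ^ r)),
      ← mul_assoc (ENNReal.ofReal (t - s)), mul_comm (ENNReal.ofReal (t - s))]
    gcongr
    exact setLIntegral_closedBall_waveKernel_mul_le x hτ hH
  rw [Measure.volume_eq_prod, setLIntegral_backwardCone t x (by fun_prop),
    ← setLIntegral_congr Ioo_ae_eq_Ioc]
  refine (setLIntegral_mono' measurableSet_Ioo hslice).trans_eq ?_
  rw [lintegral_mul_const _ (by fun_prop), setLIntegral_congr Ioo_ae_eq_Ioc,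
    lintegral_Ioc_sub_rpow (by linarith) ht]
  ring_nf

/-- The integrand which Hölder's inequality with exponents `5/2` and `5/3` splits, against the wave
kernel, into a moment `ρ` and a weight homogeneous in `τ`. -/
noncomputable def holderIntegrand (H : ℝ → ℝ≥0∞) (τ r : ℝ) (ρ : ℝ≥0∞) : ℝ≥0∞ :=
  waveKernel τ r *
    (ρ ^ (2 / 5 : ℝ) * (ENNReal.ofReal (τ ^ (-(5 / 3) : ℝ)) * H (1 - r / τ)) ^ (3 / 5 : ℝ))

theorem measurable_holderIntegrand {H : ℝ → ℝ≥0∞} (hH : Measurable H) (t : ℝ) (x : ℝ²)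
    {ρ : ℝ × ℝ² → ℝ≥0∞} (hρ : Measurable ρ) :
    Measurable fun z : ℝ × ℝ² ↦ holderIntegrand H (t - z.1) (dist z.2 x) (ρ z) := by
  unfold holderIntegrand
  fun_prop

theorem setLIntegral_backwardCone_holderIntegrand_le (x : ℝ²) {t : ℝ} (ht : 0 ≤ t)
    {ρ : ℝ × ℝ² → ℝ≥0∞} (hρ : Measurable ρ) {H : ℝ → ℝ≥0∞} (hH : Measurable H) {c : ℝ≥0∞}
    (hc : ∫⁻ v in Ioo 0 1, ENNReal.ofReal (v ^ (-(1 / 2) : ℝ)) * H v ≤ 6 * c) :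
    ∫⁻ z in backwardCone t x, holderIntegrand H (t - z.1) (dist z.2 x) (ρ z)
      ≤ ↑((36 * NNReal.pi) ^ (3 / 5 : ℝ)) * ENNReal.ofReal t ^ (1 / 5 : ℝ) *
        (c ^ (3 / 5 : ℝ) *
          (∫⁻ z in backwardCone t x, waveKernel (t - z.1) (dist z.2 x) * ρ z) ^ (2 / 5 : ℝ)) := by
  have hweight : ∫⁻ z in backwardCone t x, waveKernel (t - z.1) (dist z.2 x) *
        (ENNReal.ofReal ((t - z.1) ^ (-(5 / 3) : ℝ)) * H (1 - dist z.2 x / (t - z.1)))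
      ≤ ↑(36 * NNReal.pi) * (ENNReal.ofReal t ^ (1 / 3 : ℝ) * c) := by
    have htime : ENNReal.ofReal (t ^ (-(5 / 3) + 2 : ℝ) / (-(5 / 3) + 2))
        = 3 * ENNReal.ofReal t ^ (1 / 3 : ℝ) := by
      rw [ENNReal.ofReal_rpow_of_nonneg ht (by norm_num), ← ENNReal.ofReal_ofNat 3,
        ← ENNReal.ofReal_mul zero_le_three]
      norm_num [div_eq_inv_mul]
    refine (setLIntegral_backwardCone_waveKernel_mul_le x ht (by norm_num) hH).trans ?_
    rw [htime]
    refine (mul_le_mul_right hc _).trans_eq ?_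
    push_cast
    ring
  refine (lintegral_mul_rpow_mul_rpow_le (by fun_prop) hρ (by fun_prop) (by norm_num)
    (by norm_num) (by norm_num)).trans ?_
  rw [mul_comm]
  refine (mul_le_mul_left (ENNReal.rpow_le_rpow hweight (by norm_num)) _).trans_eq ?_
  rw [ENNReal.mul_rpow_of_nonneg _ _ (by norm_num), ENNReal.mul_rpow_of_nonneg _ _ (by norm_num),
    ← ENNReal.rpow_mul, ENNReal.coe_rpow_of_nonneg _ (by norm_num), ← mul_assoc, ← mul_assoc]
  norm_num

end Cone

section Slice

theorem ofReal_inv_pZero_mul_le (p : ℝ²) {ξ : ℝ²} (hξ : ‖ξ‖ ≤ 1) {τ : ℝ} (hτ : 0 ≤ τ) (r : ℝ) :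
    ENNReal.ofReal (pZero p * (1 + ⟪pHat p, ξ⟫) * τ * √(τ ^ 2 - r ^ 2))⁻¹
      ≤ ENNReal.ofReal τ⁻¹ * waveKernel τ r * ENNReal.ofReal (pZero p + ⟪p, ξ⟫)⁻¹ := by
  have hpos : 0 ≤ pZero p + ⟪p, ξ⟫ :=
    (mul_nonneg (sub_nonneg.2 hξ) (pZero_pos p).le).trans (one_sub_norm_mul_pZero_le p ξ)
  rw [pZero_mul_one_add_inner_pHat, mul_inv, mul_inv, ENNReal.ofReal_mul (by positivity),
    ENNReal.ofReal_mul (by positivity), mul_comm (ENNReal.ofReal τ⁻¹ * _), waveKernel, ← mul_assoc]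
  gcongr
  exact ENNReal.ofReal_inv_le

theorem lintegral_mul_ofReal_inv_pZero_mul_le {g : ℝ² → ℝ≥0∞} (hg : Measurable g) {C₀ : ℝ≥0}
    (hgC : ∀ᵐ p, g p ≤ C₀) {ε τ : ℝ} (hε : 0 < ε) {x y : ℝ²} (hy : dist y x ≤ τ) :
    ∫⁻ p, g p * ENNReal.ofReal
        (pZero p * (1 + ⟪pHat p, τ⁻¹ • (y - x)⟫) * τ * √(τ ^ 2 - dist y x ^ 2))⁻¹
      ≤ ↑(2 * (4 * NNReal.pi * C₀ + 1)) *
        (holderIntegrand (farProfile ε) τ (dist y x) (momentumMoment 2 g)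
          + holderIntegrand (nearProfile ε) τ (dist y x) (momentumMoment 4 g)) := by
  have hτ : 0 ≤ τ := dist_nonneg.trans hy
  set ξ := τ⁻¹ • (y - x)
  have hnorm : ‖ξ‖ = dist y x / τ := by
    rw [norm_smul, norm_inv, Real.norm_of_nonneg hτ, dist_eq_norm, inv_mul_eq_div]
  have hξ : ‖ξ‖ ≤ 1 := hnorm.trans_le (div_le_one_of_le₀ hy hτ)
  have hpow : ENNReal.ofReal τ⁻¹ = ENNReal.ofReal (τ ^ (-(5 / 3) : ℝ)) ^ (3 / 5 : ℝ) := by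
    rw [ENNReal.ofReal_rpow_of_nonneg (Real.rpow_nonneg hτ _) (by norm_num), ← Real.rpow_mul hτ,
      ← Real.rpow_neg_one]
    norm_num
  calc ∫⁻ p, g p * ENNReal.ofReal (pZero p * (1 + ⟪pHat p, ξ⟫) * τ * √(τ ^ 2 - dist y x ^ 2))⁻¹
      ≤ ∫⁻ p, ENNReal.ofReal τ⁻¹ * waveKernel τ (dist y x) *
          (g p * ENNReal.ofReal (pZero p + ⟪p, ξ⟫)⁻¹) :=
        lintegral_mono fun p ↦ (mul_le_mul_right (ofReal_inv_pZero_mul_le p hξ hτ _) _).trans_eq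
          (mul_left_comm _ _ _)
    _ = ENNReal.ofReal τ⁻¹ * waveKernel τ (dist y x) *
          ∫⁻ p, g p * ENNReal.ofReal (pZero p + ⟪p, ξ⟫)⁻¹ := lintegral_const_mul _ (by fun_prop)
    _ ≤ ENNReal.ofReal τ⁻¹ * waveKernel τ (dist y x) * (↑(2 * (4 * NNReal.pi * C₀ + 1)) *
          (momentumMoment 2 g ^ (2 / 5 : ℝ) * farProfile ε (1 - ‖ξ‖) ^ (3 / 5 : ℝ)
            + momentumMoment 4 g ^ (2 / 5 : ℝ) * nearProfile ε (1 - ‖ξ‖) ^ (3 / 5 : ℝ))) := by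
        gcongr
        exact lintegral_mul_inv_pZero_add_inner_le_profiles hξ hgC hε
    _ = _ := by
        simp only [holderIntegrand, hpow, hnorm,
          ENNReal.mul_rpow_of_nonneg _ _ (by norm_num : (0 : ℝ) ≤ 3 / 5)]
        ring

variable {f : ℝ → ℝ² → ℝ² → ℝ≥0∞}

theorem measurable_momentumMoment_uncurry
    (hf : Measurable fun z : ℝ × ℝ² × ℝ² ↦ f z.1 z.2.1 z.2.2) (n : ℕ) :
    Measurable fun z : ℝ × ℝ² ↦ momentumMoment n (f z.1 z.2) :=
  measurable_momentumMoment (g := fun z : ℝ × ℝ² ↦ f z.1 z.2)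
    (hf.comp MeasurableEquiv.prodAssoc.measurable) n

theorem lintegral_momentumMoment_div_eq_setLIntegral_backwardCone
    (hf : Measurable fun z : ℝ × ℝ² × ℝ² ↦ f z.1 z.2.1 z.2.2) (t : ℝ) (x : ℝ²) (n : ℕ) :
    ∫⁻ s in Ioc 0 t, ∫⁻ y in {y | dist y x ≤ t - s},
        momentumMoment n (f s y) / ENNReal.ofReal √((t - s) ^ 2 - dist y x ^ 2)
      = ∫⁻ z in backwardCone t x,
          waveKernel (t - z.1) (dist z.2 x) * momentumMoment n (f z.1 z.2) := by
  have hρ := measurable_momentumMoment_uncurry hf n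
  rw [Measure.volume_eq_prod, setLIntegral_backwardCone t x (by fun_prop)]
  simp only [waveKernel, div_eq_mul_inv, mul_comm]

theorem lintegral_mul_ofReal_inv_pZero_mul_le_setLIntegral_backwardCone {C₀ : ℝ≥0}
    (hf : Measurable fun z : ℝ × ℝ² × ℝ² ↦ f z.1 z.2.1 z.2.2)
    (hfC : ∀ᵐ z : ℝ × ℝ² × ℝ², f z.1 z.2.1 z.2.2 ≤ C₀) {ε : ℝ} (hε : 0 < ε) (t : ℝ) (x : ℝ²) :
    ∫⁻ s in Ioc 0 t, ∫⁻ y in {y | dist y x ≤ t - s}, ∫⁻ p, f s y p * ENNReal.ofReal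
        (pZero p * (1 + ⟪pHat p, (t - s)⁻¹ • (y - x)⟫) * (t - s)
          * √((t - s) ^ 2 - dist y x ^ 2))⁻¹
      ≤ ↑(2 * (4 * NNReal.pi * C₀ + 1)) *
        ((∫⁻ z in backwardCone t x, holderIntegrand (farProfile ε) (t - z.1) (dist z.2 x)
            (momentumMoment 2 (f z.1 z.2)))
          + ∫⁻ z in backwardCone t x, holderIntegrand (nearProfile ε) (t - z.1) (dist z.2 x)
            (momentumMoment 4 (f z.1 z.2))) := by
  have hslices : ∀ᵐ s, ∀ᵐ y, ∀ᵐ p, f s y p ≤ C₀ :=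
    (Measure.ae_ae_of_ae_prod hfC).mono fun s hs ↦ Measure.ae_ae_of_ae_prod hs
  have hfar := measurable_holderIntegrand (measurable_farProfile ε) t x
    (measurable_momentumMoment_uncurry hf 2)
  have hnear := measurable_holderIntegrand (measurable_nearProfile ε) t x
    (measurable_momentumMoment_uncurry hf 4)
  have hsum : Measurable fun z : ℝ × ℝ² ↦
      holderIntegrand (farProfile ε) (t - z.1) (dist z.2 x) (momentumMoment 2 (f z.1 z.2))
        + holderIntegrand (nearProfile ε) (t - z.1) (dist z.2 x) (momentumMoment 4 (f z.1 z.2)) :=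
    hfar.add hnear
  rw [← lintegral_add_left hfar, ← lintegral_const_mul _ hsum, Measure.volume_eq_prod,
    setLIntegral_backwardCone t x (hsum.const_mul _)]
  refine lintegral_mono_ae (ae_restrict_of_ae (hslices.mono fun s hs ↦ ?_))
  refine setLIntegral_mono_ae' isClosed_closedBall.measurableSet (hs.mono fun y hyC hy ↦ ?_)
  exact lintegral_mul_ofReal_inv_pZero_mul_le
    (hf.comp (by fun_prop : Measurable fun p : ℝ² ↦ (s, y, p))) hyC hε hy

end Slice

theorem KT_estimate_2d_general {C₀ : ℝ≥0} {t : ℝ} (ht : 0 ≤ t) (x : ℝ²)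
    {f : ℝ → ℝ² → ℝ² → ℝ≥0∞} (hf : Measurable fun z : ℝ × ℝ² × ℝ² ↦ f z.1 z.2.1 z.2.2)
    (hfC : ∀ᵐ z : ℝ × ℝ² × ℝ², f z.1 z.2.1 z.2.2 ≤ C₀) {ε : ℝ} (hε : 0 < ε) :
    ∫⁻ s in Ioc 0 t, ∫⁻ y in {y | dist y x ≤ t - s}, ∫⁻ p, f s y p * ENNReal.ofReal
        (pZero p * (1 + ⟪pHat p, (t - s)⁻¹ • (y - x)⟫) * (t - s)
          * √((t - s) ^ 2 - dist y x ^ 2))⁻¹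
      ≤ ↑(2 * (4 * NNReal.pi * C₀ + 1) * (36 * NNReal.pi) ^ (3 / 5 : ℝ))
        * ENNReal.ofReal t ^ (1 / 5 : ℝ) *
        (ENNReal.ofReal ε ^ (-(1 / 10) : ℝ) *
          (∫⁻ s in Ioc 0 t, ∫⁻ y in {y | dist y x ≤ t - s},
            momentumMoment 2 (f s y) / ENNReal.ofReal √((t - s) ^ 2 - dist y x ^ 2)) ^ (2 / 5 : ℝ)
        + ENNReal.ofReal ε ^ (3 / 10 : ℝ) *
          (∫⁻ s in Ioc 0 t, ∫⁻ y in {y | dist y x ≤ t - s},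
            momentumMoment 4 (f s y) / ENNReal.ofReal √((t - s) ^ 2 - dist y x ^ 2))
              ^ (2 / 5 : ℝ)) := by
  have hfar := setLIntegral_backwardCone_holderIntegrand_le x ht
    (measurable_momentumMoment_uncurry hf 2) (measurable_farProfile ε)
    (lintegral_rpow_mul_farProfile_le hε)
  have hnear := setLIntegral_backwardCone_holderIntegrand_le x ht
    (measurable_momentumMoment_uncurry hf 4) (measurable_nearProfile ε)
    ((lintegral_rpow_mul_nearProfile_le hε).trans
      (mul_le_mul_left (by norm_num : (2 : ℝ≥0∞) ≤ 6) _))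
  simp_rw [lintegral_momentumMoment_div_eq_setLIntegral_backwardCone hf]
  refine (lintegral_mul_ofReal_inv_pZero_mul_le_setLIntegral_backwardCone hf hfC hε t x).trans
    ((mul_le_mul_right (add_le_add hfar hnear) _).trans_eq ?_)
  rw [← ENNReal.rpow_mul, ← ENNReal.rpow_mul]
  push_cast
  norm_num
  ring

/-- **Estimate for the Glassey–Schaeffer term `K_T` in two dimensions**
(Proposition 5.3).  For `f : [0,t]×ℝ²×ℝ² → [0,∞)` measurable with `f ≤ C₀` a.e.,
there is `C = C(C₀)` such that for every `ε ∈ (0,1]`, with `ξ = (y−x)/(t−s)`,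
`∫₀ᵗ∫_{|y−x|≤t−s}∫ f/(p₀(1+p̂·ξ)(t−s)√((t−s)²−|y−x|²)) dp dy ds
 ≤ C(1+t)[ε^{−1/10}(∫₀ᵗ∫ (∫p₀²f dp)/√(...))^{2/5} + ε^{3/10}(∫₀ᵗ∫ (∫p₀⁴f dp)/√(...))^{2/5}]`. -/
theorem KT_estimate_2d (C₀ : ℝ) (hC₀ : 0 < C₀) :
    ∃ C : ℝ≥0, 0 < C ∧
      ∀ (t : ℝ), 0 < t → ∀ (x : EuclideanSpace ℝ (Fin 2)),
      ∀ (f : ℝ → EuclideanSpace ℝ (Fin 2) → EuclideanSpace ℝ (Fin 2) → ℝ),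
        Measurable (fun z : ℝ × EuclideanSpace ℝ (Fin 2) × EuclideanSpace ℝ (Fin 2) =>
          f z.1 z.2.1 z.2.2) →
        (∀ s y p, 0 ≤ f s y p) →
        (∀ᵐ z : ℝ × EuclideanSpace ℝ (Fin 2) × EuclideanSpace ℝ (Fin 2),
          f z.1 z.2.1 z.2.2 ≤ C₀) →
        ∀ ε : ℝ, 0 < ε → ε ≤ 1 →
          (∫⁻ s in Ioc (0 : ℝ) t, ∫⁻ y in {y | dist y x ≤ t - s},
              ∫⁻ p, ENNReal.ofReal (f s y p /
                (pZero p * (1 + ⟪pHat p, (t - s)⁻¹ • (y - x)⟫)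
                  * (t - s) * Real.sqrt ((t - s) ^ 2 - dist y x ^ 2))))
            ≤ C * ENNReal.ofReal (1 + t) *
              (ENNReal.ofReal ε ^ (-(1 / 10) : ℝ) *
                (∫⁻ s in Ioc (0 : ℝ) t, ∫⁻ y in {y | dist y x ≤ t - s},
                  (∫⁻ p, ENNReal.ofReal (pZero p ^ 2 * f s y p))
                    / ENNReal.ofReal (Real.sqrt ((t - s) ^ 2 - dist y x ^ 2)))
                      ^ ((2 : ℝ) / 5)
              + ENNReal.ofReal ε ^ ((3 : ℝ) / 10) *
                (∫⁻ s in Ioc (0 : ℝ) t, ∫⁻ y in {y | dist y x ≤ t - s},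
                  (∫⁻ p, ENNReal.ofReal (pZero p ^ 4 * f s y p))
                    / ENNReal.ofReal (Real.sqrt ((t - s) ^ 2 - dist y x ^ 2)))
                      ^ ((2 : ℝ) / 5)) := by
  refine ⟨2 * (4 * NNReal.pi * C₀.toNNReal + 1) * (36 * NNReal.pi) ^ (3 / 5 : ℝ),
    mul_pos (by positivity) (NNReal.rpow_pos (mul_pos (by norm_num) NNReal.pi_pos)),
    fun t ht x f hf hf₀ hfC ε hε _ ↦ ?_⟩
  have htime : ENNReal.ofReal t ^ (1 / 5 : ℝ) ≤ ENNReal.ofReal (1 + t) :=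
    calc ENNReal.ofReal t ^ (1 / 5 : ℝ) ≤ ENNReal.ofReal (1 + t) ^ (1 / 5 : ℝ) := by
          gcongr
          linarith
      _ ≤ ENNReal.ofReal (1 + t) ^ (1 : ℝ) :=
          ENNReal.rpow_le_rpow_of_exponent_le (by simpa using ht.le) (by norm_num)
      _ = ENNReal.ofReal (1 + t) := ENNReal.rpow_one _
  have h := KT_estimate_2d_general ht.le x (f := fun s y p ↦ ENNReal.ofReal (f s y p))
    hf.ennreal_ofReal (hfC.mono fun z hz ↦ ENNReal.ofReal_le_ofReal hz) hε
  simp only [momentumMoment, ← ENNReal.ofReal_mul (pow_nonneg (pZero_pos _).le _),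
    ← ENNReal.ofReal_mul (hf₀ _ _ _), ← div_eq_mul_inv] at h
  exact h.trans (by gcongr)
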